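/- Let N ≥ 2, let R be an N×N real symmetric positive-definite matrix with difference covariance matrix D, let 1_N ∈ ℝ^N be the all-ones vector, and let g ∈ ℝ^N with difference vector Δg ∈ ℝ^{N−1}. Then gᵀ R⁻¹ g ≥ (Δg)ᵀ D⁻¹ (Δg), and the inequality is strict if and only if 1_Nᵀ R⁻¹ g ≠ 0. -/

import Mathlib

open Matrix

/-- The difference covariance matrix: for an `N×N` matrix `R` with `N = n+2`, the
`(N−1)×(N−1)` matrix with entries `D_{mk} = R_{NN} + R_{mk} − R_{mN} − R_{kN}`. -/
def diffMatrix {n : ℕ} (R : Matrix (Fin (n + 2)) (Fin (n + 2)) ℝ) :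
    Matrix (Fin (n + 1)) (Fin (n + 1)) ℝ :=
  fun m k =>
    R (Fin.last (n + 1)) (Fin.last (n + 1)) + R m.castSucc k.castSucc
      - R m.castSucc (Fin.last (n + 1)) - R k.castSucc (Fin.last (n + 1))

/-- The difference vector `Δg ∈ ℝ^{N−1}`, `(Δg)_m = g_m − g_N`. -/
def diffVec {n : ℕ} (g : Fin (n + 2) → ℝ) : Fin (n + 1) → ℝ :=
  fun m => g m.castSucc - g (Fin.last (n + 1))

/-!
In the inner product `⟨x, y⟩ = xᴴ R⁻¹ y`, the orthogonal complement of `ker P` is the range of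
`R Pᴴ`, so the projection of `g` onto that complement is `R Pᴴ (P R Pᴴ)⁻¹ P g`, whose squared norm
is `(P g)ᴴ (P R Pᴴ)⁻¹ (P g)`. By Pythagoras, `gᴴ R⁻¹ g` exceeds this by the squared norm of the
projection of `g` onto `ker P`, which vanishes exactly when `R⁻¹ g` lies in the range of `Pᴴ`. For
the difference operator `Δ` that range is the hyperplane of vectors orthogonal to `1`.
-/

section KernelProjection

variable {ι κ K : Type*} [Fintype ι] [Fintype κ]

lemma star_dotProduct_conjTranspose_mulVec [NonUnitalSemiring K] [StarRing K] (P : Matrix κ ι K)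
    (x : ι → K) (z : κ → K) : star x ⬝ᵥ (Pᴴ *ᵥ z) = star (P *ᵥ x) ⬝ᵥ z := by
  rw [dotProduct_mulVec, star_mulVec]

variable [DecidableEq κ]

section CommRing

variable [CommRing K] [StarRing K]

/-- The projection of `g` onto the kernel of `P` that is orthogonal for the form
`(x, y) ↦ xᴴ R⁻¹ y`. It is written without `R⁻¹`, and is meaningful when `P R Pᴴ` is invertible. -/
noncomputable def kerProj (R : Matrix ι ι K) (P : Matrix κ ι K) (g : ι → K) : ι → K :=
  g - R *ᵥ (Pᴴ *ᵥ ((P * R * Pᴴ)⁻¹ *ᵥ (P *ᵥ g)))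

variable {R : Matrix ι ι K} {P : Matrix κ ι K}

lemma mulVec_kerProj (hD : IsUnit (P * R * Pᴴ)) (g : ι → K) : P *ᵥ kerProj R P g = 0 := by
  rw [isUnit_iff_isUnit_det] at hD
  rw [kerProj, mulVec_sub, sub_eq_zero]
  simp only [mulVec_mulVec, ← Matrix.mul_assoc, mul_nonsing_inv _ hD, Matrix.one_mul]

variable [DecidableEq ι]

lemma inv_mulVec_kerProj (hR : IsUnit R) (g : ι → K) :
    R⁻¹ *ᵥ kerProj R P g = R⁻¹ *ᵥ g - Pᴴ *ᵥ ((P * R * Pᴴ)⁻¹ *ᵥ (P *ᵥ g)) := by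
  rw [isUnit_iff_isUnit_det] at hR
  rw [kerProj, mulVec_sub, mulVec_mulVec _ R⁻¹ R, nonsing_inv_mul _ hR, one_mulVec]

lemma kerProj_eq_zero_iff (hR : IsUnit R) (hD : IsUnit (P * R * Pᴴ)) (g : ι → K) :
    kerProj R P g = 0 ↔ R⁻¹ *ᵥ g ∈ Set.range Pᴴ.mulVec := by
  constructor
  · intro h
    have hinv := inv_mulVec_kerProj (P := P) hR g
    rw [h, mulVec_zero, eq_comm, sub_eq_zero] at hinv
    exact ⟨_, hinv.symm⟩
  · rintro ⟨z, hz⟩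
    rw [isUnit_iff_isUnit_det] at hR hD
    have hg : g = R *ᵥ (Pᴴ *ᵥ z) := by
      rw [hz, mulVec_mulVec, mul_nonsing_inv _ hR, one_mulVec]
    have hPg : P *ᵥ g = (P * R * Pᴴ) *ᵥ z := by
      rw [hg, mulVec_mulVec, mulVec_mulVec, Matrix.mul_assoc]
    rw [kerProj, hPg, mulVec_mulVec _ (P * R * Pᴴ)⁻¹, nonsing_inv_mul _ hD, one_mulVec, ← hg,
      sub_self]

lemma star_dotProduct_inv_mulVec_eq_add_kerProj (hherm : R.IsHermitian) (hR : IsUnit R)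
    (hD : IsUnit (P * R * Pᴴ)) (g : ι → K) :
    star g ⬝ᵥ (R⁻¹ *ᵥ g) =
      star (P *ᵥ g) ⬝ᵥ ((P * R * Pᴴ)⁻¹ *ᵥ (P *ᵥ g)) +
        star (kerProj R P g) ⬝ᵥ (R⁻¹ *ᵥ kerProj R P g) := by
  set r := kerProj R P g with hr
  set z := (P * R * Pᴴ)⁻¹ *ᵥ (P *ᵥ g)
  have hg : g = r + R *ᵥ (Pᴴ *ᵥ z) := (sub_add_cancel g _).symm
  have hinv : R⁻¹ *ᵥ g = R⁻¹ *ᵥ r + Pᴴ *ᵥ z := by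
    rw [hr, inv_mulVec_kerProj hR, sub_add_cancel]
  have horth : star (R *ᵥ (Pᴴ *ᵥ z)) ⬝ᵥ (R⁻¹ *ᵥ r) = 0 := by
    rw [← star_dotProduct_conjTranspose_mulVec R, hherm.eq, mulVec_mulVec r R,
      mul_nonsing_inv _ ((isUnit_iff_isUnit_det R).1 hR), one_mulVec,
      ← star_dotProduct_conjTranspose_mulVec, conjTranspose_conjTranspose, hr, mulVec_kerProj hD,
      dotProduct_zero]
  calc star g ⬝ᵥ (R⁻¹ *ᵥ g)
      = star g ⬝ᵥ (R⁻¹ *ᵥ r) + star g ⬝ᵥ (Pᴴ *ᵥ z) := by rw [hinv, dotProduct_add]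
    _ = star r ⬝ᵥ (R⁻¹ *ᵥ r) + star (P *ᵥ g) ⬝ᵥ z := by
      rw [star_dotProduct_conjTranspose_mulVec]
      nth_rw 1 [hg]
      rw [star_add, add_dotProduct, horth, add_zero]
    _ = star (P *ᵥ g) ⬝ᵥ z + star r ⬝ᵥ (R⁻¹ *ᵥ r) := add_comm _ _

end CommRing

theorem rss_quadratic_form_ge_drss_general [DecidableEq ι] [Field K] [PartialOrder K]
    [IsOrderedAddMonoid K] [StarRing K] {R : Matrix ι ι K} {P : Matrix κ ι K} (hR : R.PosDef)
    (hP : Function.Injective P.vecMul) (g : ι → K) :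
    star (P *ᵥ g) ⬝ᵥ ((P * R * Pᴴ)⁻¹ *ᵥ (P *ᵥ g)) ≤ star g ⬝ᵥ (R⁻¹ *ᵥ g) ∧
      (star (P *ᵥ g) ⬝ᵥ ((P * R * Pᴴ)⁻¹ *ᵥ (P *ᵥ g)) < star g ⬝ᵥ (R⁻¹ *ᵥ g) ↔
        R⁻¹ *ᵥ g ∉ Set.range Pᴴ.mulVec) := by
  have hD : IsUnit (P * R * Pᴴ) := (hR.mul_mul_conjTranspose_same hP).isUnit
  rw [star_dotProduct_inv_mulVec_eq_add_kerProj hR.isHermitian hR.isUnit hD,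
    ← kerProj_eq_zero_iff hR.isUnit hD, le_add_iff_nonneg_right, lt_add_iff_pos_right]
  by_cases hr : kerProj R P g = 0
  · simp [hr]
  · have hpos := hR.inv.dotProduct_mulVec_pos hr
    exact ⟨hpos.le, iff_of_true hpos hr⟩

end KernelProjection

section DifferenceOperator

/-- The matrix of the difference operator `g ↦ Δg`, `(Δg)_m = g_m - g_n`, whose reference
coordinate `n` is the last of the `n + 1`. -/
def diffOp (A : Type*) [Ring A] (n : ℕ) : Matrix (Fin n) (Fin (n + 1)) A :=
  .of fun m => Pi.single m.castSucc 1 - Pi.single (Fin.last n) 1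

variable {A : Type*} [Ring A] {n : ℕ}

lemma diffOp_mulVec_apply (g : Fin (n + 1) → A) (m : Fin n) :
    (diffOp A n *ᵥ g) m = g m.castSucc - g (Fin.last n) := by
  simp [diffOp, mulVec, dotProduct, sub_mul, Pi.single_apply]

lemma diffOp_mul_apply {κ : Type*} (M : Matrix (Fin (n + 1)) κ A) (m : Fin n) (k : κ) :
    (diffOp A n * M) m k = M m.castSucc k - M (Fin.last n) k :=
  diffOp_mulVec_apply (fun j => M j k) m

lemma mul_transpose_diffOp_apply {κ : Type*} (M : Matrix κ (Fin (n + 1)) A) (k : κ) (m : Fin n) :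
    (M * (diffOp A n)ᵀ) k m = M k m.castSucc - M k (Fin.last n) := by
  simp [diffOp, mul_apply, mul_sub, Pi.single_apply]

lemma vecMul_diffOp_castSucc (z : Fin n → A) (m : Fin n) :
    (z ᵥ* diffOp A n) m.castSucc = z m := by
  simp [diffOp, vecMul, dotProduct, Pi.single_apply, Fin.castSucc_ne_last]

lemma vecMul_diffOp_last (z : Fin n → A) : (z ᵥ* diffOp A n) (Fin.last n) = -∑ m, z m := by
  simp [diffOp, vecMul, dotProduct, (Fin.castSucc_ne_last _).symm]

lemma vecMul_diffOp_injective : Function.Injective (diffOp A n).vecMul := fun z z' h =>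
  funext fun m => by simpa only [vecMul_diffOp_castSucc] using congrFun h m.castSucc

lemma mem_range_transpose_diffOp_mulVec_iff {A : Type*} [CommRing A] {y : Fin (n + 1) → A} :
    y ∈ Set.range (diffOp A n)ᵀ.mulVec ↔ ∑ j, y j = 0 := by
  simp only [Set.mem_range, mulVec_transpose, Fin.sum_univ_castSucc]
  constructor
  · rintro ⟨z, rfl⟩
    simp only [vecMul_diffOp_castSucc, vecMul_diffOp_last, add_neg_cancel]
  · intro hy
    refine ⟨fun m => y m.castSucc, funext (Fin.lastCases ?_ (vecMul_diffOp_castSucc _))⟩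
    rw [vecMul_diffOp_last, neg_eq_of_add_eq_zero_right hy]

end DifferenceOperator

lemma diffVec_eq_mulVec {n : ℕ} (g : Fin (n + 2) → ℝ) : diffVec g = diffOp ℝ (n + 1) *ᵥ g :=
  funext fun m => (diffOp_mulVec_apply g m).symm

lemma diffMatrix_eq_mul {n : ℕ} {R : Matrix (Fin (n + 2)) (Fin (n + 2)) ℝ} (hR : R.IsSymm) :
    diffMatrix R = diffOp ℝ (n + 1) * R * (diffOp ℝ (n + 1))ᵀ := by
  ext m k
  have hsymm := hR.apply (Fin.last (n + 1)) k.castSucc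
  rw [mul_transpose_diffOp_apply, diffOp_mul_apply, diffOp_mul_apply, diffMatrix, hsymm]
  ring

/-- `gᵀ R⁻¹ g ≥ (Δg)ᵀ D⁻¹ (Δg)`, with strict inequality iff
`1ᵀ R⁻¹ g ≠ 0`. -/
theorem rss_quadratic_form_ge_drss
    (n : ℕ) (R : Matrix (Fin (n + 2)) (Fin (n + 2)) ℝ)
    (hRsymm : R.IsSymm) (hRpd : R.PosDef) (g : Fin (n + 2) → ℝ) :
    let D := diffMatrix R
    let ones : Fin (n + 2) → ℝ := fun _ => (1 : ℝ)
    diffVec g ⬝ᵥ (D⁻¹).mulVec (diffVec g) ≤ g ⬝ᵥ (R⁻¹).mulVec g ∧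
      (diffVec g ⬝ᵥ (D⁻¹).mulVec (diffVec g) < g ⬝ᵥ (R⁻¹).mulVec g
        ↔ ones ⬝ᵥ (R⁻¹).mulVec g ≠ 0) := by
  intro D ones
  have hones : ones ⬝ᵥ (R⁻¹ *ᵥ g) = ∑ j, (R⁻¹ *ᵥ g) j := one_dotProduct _
  simpa only [D, hones, diffVec_eq_mulVec, diffMatrix_eq_mul hRsymm, star_trivial,
    conjTranspose_eq_transpose_of_trivial, mem_range_transpose_diffOp_mulVec_iff] using
    rss_quadratic_form_ge_drss_general hRpd vecMul_diffOp_injective g
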